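/- Let A be a real m×n matrix (m < n) of full rank m, let b be a real m-vector, and let u be the all-ones n-vector. Assume A u ≠ 0. Define α* = (uᵀ Aᵀ (A Aᵀ)⁻¹ b) / (uᵀ Aᵀ (A Aᵀ)⁻¹ A u) and the base solution x_B = Aᵀ (A Aᵀ)⁻¹ (b − (A u) α*). Then x_B is the unique minimum-variance solution of the base system: for every real n-vector z with A z = b − (A u) α* and z ≠ x_B, the variance of z is strictly greater than ‖x_B‖² (which equals the variance of x_B, since x_B is zero mean). -/

import Mathlib

open Matrix

noncomputable def mean {n : ℕ} (x : Fin n → ℝ) : ℝ := (∑ i, x i) / n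

noncomputable def variance {n : ℕ} (x : Fin n → ℝ) : ℝ := ∑ i, (x i - mean x) ^ 2

/-!
Write `x` for the base solution. It lies in the row space of `A`, hence is orthogonal to `ker A`,
and `α*` is exactly the coefficient that makes it orthogonal to `u` as well. If `A z = A x`, then
for every scalar `t` the vector `z - t u - x` is orthogonal to `x`, so Pythagoras gives
`‖x‖² ≤ ‖z - t u‖²`. Equality forces `z - x = t u`; as `z - x ∈ ker A` and `A u ≠ 0`, this means
`t = 0` and `z = x`. The variance of `z` is the case where `u` is the all-ones vector and
`t = mean z`.
-/

section CommRing

variable {ι κ R : Type*} [Fintype ι] [DecidableEq ι] [Fintype κ] [CommRing R]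

/-- The minimum-norm solution `Aᵀ (A Aᵀ)⁻¹ c` of `A x = c`, as a linear function of `c`. It is
meaningful only when `A Aᵀ` is invertible, since `⁻¹` is `0` on non-invertible matrices. -/
noncomputable def minNormSolution (A : Matrix ι κ R) : (ι → R) →ₗ[R] (κ → R) :=
  Aᵀ.mulVecLin ∘ₗ (A * Aᵀ)⁻¹.mulVecLin

theorem mulVec_minNormSolution {A : Matrix ι κ R} (hA : IsUnit (A * Aᵀ)) (c : ι → R) :
    A *ᵥ minNormSolution A c = c := by
  change A *ᵥ Aᵀ *ᵥ (A * Aᵀ)⁻¹ *ᵥ c = c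
  rw [mulVec_mulVec, mulVec_mulVec, mul_nonsing_inv _ ((isUnit_iff_isUnit_det _).1 hA), one_mulVec]

theorem dotProduct_minNormSolution_eq_zero {A : Matrix ι κ R} {v : κ → R} (hv : A *ᵥ v = 0)
    (c : ι → R) : v ⬝ᵥ minNormSolution A c = 0 := by
  change v ⬝ᵥ Aᵀ *ᵥ (A * Aᵀ)⁻¹ *ᵥ c = 0
  rw [dotProduct_transpose_mulVec, hv, dotProduct_zero]

theorem minNormSolution_mulVec_dotProduct {A : Matrix ι κ R} (hA : IsUnit (A * Aᵀ)) (v : κ → R)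
    (c : ι → R) :
    minNormSolution A (A *ᵥ v) ⬝ᵥ minNormSolution A c = v ⬝ᵥ minNormSolution A c := by
  have hker : A *ᵥ (minNormSolution A (A *ᵥ v) - v) = 0 := by
    rw [mulVec_sub, mulVec_minNormSolution hA, sub_self]
  rw [← sub_eq_zero, ← sub_dotProduct, dotProduct_minNormSolution_eq_zero hker]

end CommRing

theorem sum_sq_lt_sum_sq_of_sub_dotProduct_eq_zero {κ R : Type*} [Fintype κ] [CommRing R]
    [LinearOrder R] [IsStrictOrderedRing R] {x y : κ → R} (horth : (y - x) ⬝ᵥ x = 0)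
    (hne : y ≠ x) : ∑ i, x i ^ 2 < ∑ i, y i ^ 2 := by
  have hpos : 0 < (y - x) ⬝ᵥ (y - x) :=
    (Finset.sum_nonneg fun i _ => mul_self_nonneg ((y - x) i)).lt_of_ne'
      (dotProduct_self_eq_zero.not.2 (sub_ne_zero.2 hne))
  calc ∑ i, x i ^ 2 < (y - x) ⬝ᵥ (y - x) + 2 * ((y - x) ⬝ᵥ x) + ∑ i, x i ^ 2 := by
        rw [horth]; linarith
    _ = ∑ i, y i ^ 2 := by
        simp only [dotProduct, Pi.sub_apply, Finset.mul_sum, ← Finset.sum_add_distrib]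
        exact Finset.sum_congr rfl fun i _ => by ring

section Field

variable {ι κ K : Type*} [Fintype ι] [DecidableEq ι] [Fintype κ] [Field K]

/-- The coefficient `α*`, characterized by `u` being orthogonal to the minimum-norm solution of
`A x = b - α* • A u`. The denominator must be nonzero for this, as division by zero gives `0`. -/
noncomputable def baseCoeff (A : Matrix ι κ K) (b : ι → K) (u : κ → K) : K :=
  (u ⬝ᵥ minNormSolution A b) / (u ⬝ᵥ minNormSolution A (A *ᵥ u))

/-- The base solution `x_B`: the minimum-norm solution of the base system
`A x = b - α* • A u`. -/
noncomputable def baseSolution (A : Matrix ι κ K) (b : ι → K) (u : κ → K) : κ → K :=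
  minNormSolution A (b - baseCoeff A b u • (A *ᵥ u))

theorem dotProduct_baseSolution_eq_zero {A : Matrix ι κ K} {u : κ → K}
    (hu : u ⬝ᵥ minNormSolution A (A *ᵥ u) ≠ 0) (b : ι → K) : u ⬝ᵥ baseSolution A b u = 0 := by
  rw [baseSolution, map_sub, map_smul, dotProduct_sub, dotProduct_smul, smul_eq_mul, baseCoeff,
    div_mul_cancel₀ _ hu, sub_self]

variable [LinearOrder K] [IsStrictOrderedRing K]

theorem isUnit_mul_transpose_of_rank_eq_card {A : Matrix ι κ K}
    (hrank : A.rank = Fintype.card ι) : IsUnit (A * Aᵀ) := by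
  rw [← linearIndependent_rows_iff_isUnit, linearIndependent_iff_card_eq_finrank_span,
    Set.finrank, ← rank_eq_finrank_span_row, rank_self_mul_transpose, hrank]

theorem dotProduct_minNormSolution_mulVec_ne_zero {A : Matrix ι κ K} (hA : IsUnit (A * Aᵀ))
    {u : κ → K} (hAu : A *ᵥ u ≠ 0) : u ⬝ᵥ minNormSolution A (A *ᵥ u) ≠ 0 := by
  rw [← minNormSolution_mulVec_dotProduct hA, Ne, dotProduct_self_eq_zero]
  intro hzero
  apply hAu
  rw [← mulVec_minNormSolution hA (A *ᵥ u), hzero, mulVec_zero]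

theorem base_solution_unique_mv_general {A : Matrix ι κ K} (hrank : A.rank = Fintype.card ι)
    (b : ι → K) {u : κ → K} (hAu : A *ᵥ u ≠ 0) {z : κ → K}
    (hz : A *ᵥ z = b - baseCoeff A b u • (A *ᵥ u)) (hne : z ≠ baseSolution A b u) (t : K) :
    ∑ i, baseSolution A b u i ^ 2 < ∑ i, (z i - t * u i) ^ 2 := by
  have hA : IsUnit (A * Aᵀ) := isUnit_mul_transpose_of_rank_eq_card hrank
  have hker : A *ᵥ (z - baseSolution A b u) = 0 := by
    rw [mulVec_sub, hz, baseSolution, mulVec_minNormSolution hA, sub_self]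
  have horth_ker : (z - baseSolution A b u) ⬝ᵥ baseSolution A b u = 0 :=
    dotProduct_minNormSolution_eq_zero hker _
  have horth_u : u ⬝ᵥ baseSolution A b u = 0 :=
    dotProduct_baseSolution_eq_zero (dotProduct_minNormSolution_mulVec_ne_zero hA hAu) b
  refine sum_sq_lt_sum_sq_of_sub_dotProduct_eq_zero (y := z - t • u) ?_ fun heq => ?_
  · rw [sub_right_comm, sub_dotProduct, smul_dotProduct, horth_ker, horth_u, smul_zero, sub_zero]
  · have hdiff : z - baseSolution A b u = t • u := by rw [← heq, sub_sub_cancel]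
    have ht : t = 0 := by
      rw [hdiff, mulVec_smul] at hker
      exact (smul_eq_zero.1 hker).resolve_right hAu
    rw [ht, zero_smul] at hdiff
    exact hne (sub_eq_zero.1 hdiff)

end Field

theorem base_solution_unique_mv (m n : ℕ) (hm : 0 < m) (hmn : m < n)
    (A : Matrix (Fin m) (Fin n) ℝ) (hrank : A.rank = m)
    (b : Fin m → ℝ)
    (u : Fin n → ℝ) (hu : u = fun _ => (1 : ℝ))
    (hAu : A *ᵥ u ≠ 0)
    (αs : ℝ)
    (hαs : αs = (u ⬝ᵥ Aᵀ *ᵥ ((A * Aᵀ)⁻¹ *ᵥ b)) /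
                (u ⬝ᵥ Aᵀ *ᵥ ((A * Aᵀ)⁻¹ *ᵥ (A *ᵥ u))))
    (xB : Fin n → ℝ)
    (hxB : xB = Aᵀ *ᵥ ((A * Aᵀ)⁻¹ *ᵥ (b - αs • (A *ᵥ u)))) :
    ∀ z : Fin n → ℝ, A *ᵥ z = b - αs • (A *ᵥ u) → z ≠ xB →
      (∑ i, xB i ^ 2) < variance z := by
  intro z hz hne
  obtain rfl : αs = baseCoeff A b u := hαs
  obtain rfl : xB = baseSolution A b u := hxB
  subst hu
  simpa only [variance, mul_one] using
    base_solution_unique_mv_general (hrank.trans (Fintype.card_fin m).symm) b hAu hz hne (mean z)
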